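/- Fix U > 0, σ₁, σ₂ > 0 and 0 < K < U. Suppose Σ : (0,∞) → (0,∞) satisfies C^bs(U, K, τ, Σ(τ)) = C^σ(U,K,τ) for all τ > 0, i.e. Σ(τ) is the Black–Scholes implied volatility of the PCLVG call price with strike K and time to maturity τ. Then lim_{τ→0+} Σ(τ) = √σ₁ · log(U/K) / √(2(U−K)). -/

import Mathlib

open MeasureTheory Filter Set

/-- Standard normal cumulative distribution function. -/
noncomputable def stdNormalCDF (x : ℝ) : ℝ :=
  (Real.sqrt (2 * Real.pi))⁻¹ * ∫ y in Set.Iic x, Real.exp (-(y ^ 2) / 2)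

/-- Black–Scholes call price with zero interest and dividend rates. -/
noncomputable def bsCall (S K τ σ : ℝ) : ℝ :=
  let d1 := (Real.log (S / K) + σ ^ 2 * τ / 2) / (σ * Real.sqrt τ)
  S * stdNormalCDF d1 - K * stdNormalCDF (d1 - σ * Real.sqrt τ)

/-- Black–Scholes put price with zero interest and dividend rates. -/
noncomputable def bsPut (S K τ σ : ℝ) : ℝ := bsCall S K τ σ - S + K

/-- The denominator appearing in the PCLVG call price formula. -/
noncomputable def pclvgD (σ1 σ2 U τ : ℝ) : ℝ :=
  1 / σ1 + 1 / σ2 - (1 / σ2 - 1 / σ1) * Real.exp (-2 * U / (σ1 * τ))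

/-- The explicit PCLVG call price `C^σ(U,K,τ)`. -/
noncomputable def pclvgCall (σ1 σ2 U K τ : ℝ) : ℝ :=
  if K < U then
    (U - K) +
      τ * Real.exp (-(U - K) / (σ1 * τ)) * (1 - Real.exp (-2 * K / (σ1 * τ))) /
        pclvgD σ1 σ2 U τ
  else
    τ * Real.exp (-(K - U) / (σ2 * τ)) * (1 - Real.exp (-2 * U / (σ1 * τ))) /
      pclvgD σ1 σ2 U τ

/-- The PCLVG put price `P^σ(U,K,τ) = C^σ(U,K,τ) − (U − K)`. -/
noncomputable def pclvgPut (σ1 σ2 U K τ : ℝ) : ℝ := pclvgCall σ1 σ2 U K τ - (U - K)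


lemma aux_integrable : Integrable (fun y : ℝ => Real.exp (-(y ^ 2) / 2)) := by
  have := integrable_exp_neg_mul_sq (b := 1/2) (by norm_num)
  refine this.congr (ae_of_all _ fun y => ?_)
  simp only
  congr 1; ring

lemma aux_cdf_deriv (x : ℝ) :
    HasDerivAt stdNormalCDF ((Real.sqrt (2 * Real.pi))⁻¹ * Real.exp (-(x ^ 2) / 2)) x := by
  unfold stdNormalCDF
  refine HasDerivAt.const_mul _ ?_
  have hc : Continuous (fun y : ℝ => Real.exp (-(y ^ 2) / 2)) := by fun_prop
  have h := (intervalIntegral.integral_hasDerivAt_right (hc.intervalIntegrable 0 x)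
    (hc.stronglyMeasurableAtFilter _ _) hc.continuousAt).const_add
      (∫ y in Set.Iic (0:ℝ), Real.exp (-(y ^ 2) / 2))
  refine h.congr_of_eventuallyEq (Eventually.of_forall fun u => ?_)
  have := intervalIntegral.integral_Iic_sub_Iic (a := 0) (b := u) (μ := volume)
    aux_integrable.integrableOn aux_integrable.integrableOn
  simp only
  linarith

lemma aux_cdf_top : Tendsto stdNormalCDF atTop (nhds 1) := by
  unfold stdNormalCDF
  have h1 : Tendsto (fun x : ℝ => ∫ y in Set.Iic x, Real.exp (-(y ^ 2) / 2)) atTop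
      (nhds (∫ y : ℝ, Real.exp (-(y ^ 2) / 2))) :=
    (aecover_Iic tendsto_id).integral_tendsto_of_countably_generated aux_integrable
  have h2 : (∫ y : ℝ, Real.exp (-(y ^ 2) / 2)) = Real.sqrt (2 * Real.pi) := by
    have := integral_gaussian (1/2)
    rw [show Real.pi / (1/2) = 2 * Real.pi by ring] at this
    rw [← this]
    congr 1; ext y; congr 1; ring
  rw [h2] at h1
  have h3 := h1.const_mul (Real.sqrt (2 * Real.pi))⁻¹
  rwa [inv_mul_cancel₀ (by positivity)] at h3

/-- Normalised put price as a function of total volatility. -/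
noncomputable def auxPut (U K v : ℝ) : ℝ :=
  U * stdNormalCDF (Real.log (U / K) / v + v / 2)
    - K * stdNormalCDF (Real.log (U / K) / v - v / 2) - U + K

/-- Its vega. -/
noncomputable def auxVega (U K v : ℝ) : ℝ :=
  U * ((Real.sqrt (2 * Real.pi))⁻¹ * Real.exp (-((Real.log (U / K) / v + v / 2) ^ 2) / 2))

lemma auxPut_deriv (U K v : ℝ) (hU : 0 < U) (hK : 0 < K) (hv : 0 < v) :
    HasDerivAt (auxPut U K) (auxVega U K v) v := by
  unfold auxPut auxVega
  set L := Real.log (U / K) with hL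
  have hUK : U = K * Real.exp L := by
    rw [hL, Real.exp_log (by positivity)]; field_simp
  have e1 : HasDerivAt (fun v : ℝ => L / v) (L * (-(v ^ 2)⁻¹)) v := by
    simpa [div_eq_mul_inv] using (hasDerivAt_inv hv.ne').const_mul L
  have e2 : HasDerivAt (fun v : ℝ => v / 2) (1 / 2) v := (hasDerivAt_id v).div_const 2
  have d1 := ((aux_cdf_deriv (L / v + v / 2)).comp v (e1.add e2)).const_mul U
  have d2 := ((aux_cdf_deriv (L / v - v / 2)).comp v (e1.sub e2)).const_mul K
  have d := ((d1.sub d2).sub_const U).add_const K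
  refine d.congr_deriv ?_
  have key : K * Real.exp (-((L / v - v / 2) ^ 2) / 2)
      = U * Real.exp (-((L / v + v / 2) ^ 2) / 2) := by
    rw [hUK, mul_assoc, ← Real.exp_add]
    congr 2
    field_simp
    ring
  have : K * ((Real.sqrt (2 * Real.pi))⁻¹ * Real.exp (-((L / v - v / 2) ^ 2) / 2)
        * (L * (-(v ^ 2)⁻¹) - 1 / 2))
      = (K * Real.exp (-((L / v - v / 2) ^ 2) / 2)) * (Real.sqrt (2 * Real.pi))⁻¹
        * (L * (-(v ^ 2)⁻¹) - 1 / 2) := by ring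
  rw [this, key]
  ring

lemma auxVega_pos (U K v : ℝ) (hU : 0 < U) : 0 < auxVega U K v := by
  unfold auxVega; positivity

lemma auxPut_strictMono (U K : ℝ) (hU : 0 < U) (hK : 0 < K) :
    StrictMonoOn (auxPut U K) (Ioi 0) := by
  refine strictMonoOn_of_deriv_pos (convex_Ioi 0)
    (fun x hx => (auxPut_deriv U K x hU hK hx).continuousAt.continuousWithinAt) ?_
  intro x hx
  rw [interior_Ioi] at hx
  rw [(auxPut_deriv U K x hU hK hx).deriv]
  exact auxVega_pos U K x hU

lemma auxPut_zero (U K : ℝ) (hK0 : 0 < K) (hK : K < U) :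
    Tendsto (auxPut U K) (nhdsWithin 0 (Ioi 0)) (nhds 0) := by
  have hL : 0 < Real.log (U / K) := Real.log_pos ((one_lt_div hK0).2 hK)
  have t1 : Tendsto (fun v : ℝ => Real.log (U / K) / v) (nhdsWithin 0 (Ioi 0)) atTop := by
    simpa [div_eq_mul_inv] using tendsto_inv_nhdsGT_zero.const_mul_atTop hL
  have t2 : Tendsto (fun v : ℝ => v / 2) (nhdsWithin 0 (Ioi 0)) (nhds 0) := by
    have : Tendsto (fun v : ℝ => v / 2) (nhds 0) (nhds (0 / 2)) := tendsto_id.div_const 2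
    rw [zero_div] at this
    exact this.mono_left nhdsWithin_le_nhds
  have t3 : Tendsto (fun v : ℝ => -(v / 2)) (nhdsWithin 0 (Ioi 0)) (nhds 0) := by
    simpa using t2.neg
  have a := (aux_cdf_top.comp (t1.atTop_add t2)).const_mul U
  have b := (aux_cdf_top.comp (t1.atTop_add t3)).const_mul K
  have := ((a.sub b).sub_const U).add_const K
  have e : U * 1 - K * 1 - U + K = 0 := by ring
  rw [e] at this
  refine this.congr fun v => ?_
  simp [auxPut, Function.comp, sub_eq_add_neg]

lemma auxPut_nonneg (U K v : ℝ) (hK0 : 0 < K) (hK : K < U) (hv : 0 < v) :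
    0 ≤ auxPut U K v := by
  refine le_of_tendsto (auxPut_zero U K hK0 hK) ?_
  filter_upwards [Ioo_mem_nhdsGT hv] with w hw
  exact (auxPut_strictMono U K (hK0.trans hK) hK0 hw.1 hv hw.2).le

lemma auxVega_le (U K v w : ℝ) (hK0 : 0 < K) (hK : K < U) (hw : 0 < w) (hwv : w ≤ v) :
    auxVega U K w ≤ U * Real.exp (-(Real.log (U / K)) ^ 2 / (2 * v ^ 2)) := by
  have hL : 0 < Real.log (U / K) := Real.log_pos ((one_lt_div hK0).2 hK)
  have hU : 0 < U := hK0.trans hK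
  unfold auxVega
  have h1 : (Real.sqrt (2 * Real.pi))⁻¹ ≤ 1 := by
    apply inv_le_one_of_one_le₀
    rw [Real.one_le_sqrt]
    linarith [Real.pi_gt_three]
  have h2 : Real.exp (-((Real.log (U / K) / w + w / 2) ^ 2) / 2)
      ≤ Real.exp (-(Real.log (U / K)) ^ 2 / (2 * v ^ 2)) := by
    apply Real.exp_le_exp.2
    have a1 : Real.log (U / K) / v ≤ Real.log (U / K) / w + w / 2 := by
      have : Real.log (U / K) / v ≤ Real.log (U / K) / w := by gcongr
      linarith
    have a2 : (Real.log (U / K) / v) ^ 2 ≤ (Real.log (U / K) / w + w / 2) ^ 2 := by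
      have : 0 ≤ Real.log (U / K) / v := div_nonneg hL.le (hw.le.trans hwv)
      gcongr
    have a3 : -(Real.log (U / K)) ^ 2 / (2 * v ^ 2) = -((Real.log (U / K) / v) ^ 2) / 2 := by
      rw [div_pow, ← div_div, div_right_comm, neg_div]
    rw [a3]; linarith
  calc _ ≤ U * (1 * Real.exp (-(Real.log (U / K)) ^ 2 / (2 * v ^ 2))) := by gcongr
    _ = _ := by ring

lemma auxPut_le (U K v : ℝ) (hK0 : 0 < K) (hK : K < U) (hv : 0 < v) :
    auxPut U K v ≤ v * (U * Real.exp (-(Real.log (U / K)) ^ 2 / (2 * v ^ 2))) := by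
  have hU : 0 < U := hK0.trans hK
  have h := (auxPut_zero U K hK0 hK).const_add
    (v * (U * Real.exp (-(Real.log (U / K)) ^ 2 / (2 * v ^ 2))))
  rw [add_zero] at h
  refine ge_of_tendsto h ?_
  filter_upwards [Ioo_mem_nhdsGT hv] with w hw
  obtain ⟨c, hc, he⟩ := exists_hasDerivAt_eq_slope (auxPut U K) (auxVega U K) hw.2
    (fun x hx => (auxPut_deriv U K x hU hK0 (hw.1.trans_le hx.1)).continuousAt.continuousWithinAt)
    (fun x hx => auxPut_deriv U K x hU hK0 (hw.1.trans hx.1))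
  have hle := auxVega_le U K v c hK0 hK (hw.1.trans hc.1) hc.2.le
  rw [eq_div_iff (sub_pos.2 hw.2).ne'] at he
  have hE : 0 < U * Real.exp (-(Real.log (U / K)) ^ 2 / (2 * v ^ 2)) := by positivity
  have hvw : 0 < v - w := sub_pos.2 hw.2
  nlinarith [mul_le_mul_of_nonneg_right hle hvw.le, mul_pos hw.1 hE]

lemma auxPut_ge (U K w v : ℝ) (hK0 : 0 < K) (hK : K < U) (hw : 0 < w) (hwv : w < v) :
    (v - w) * (U * ((Real.sqrt (2 * Real.pi))⁻¹ *
      Real.exp (-((Real.log (U / K) / w + v / 2) ^ 2) / 2))) ≤ auxPut U K v := by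
  have hU : 0 < U := hK0.trans hK
  have hL : 0 < Real.log (U / K) := Real.log_pos ((one_lt_div hK0).2 hK)
  obtain ⟨c, hc, he⟩ := exists_hasDerivAt_eq_slope (auxPut U K) (auxVega U K) hwv
    (fun x hx => (auxPut_deriv U K x hU hK0 (hw.trans_le hx.1)).continuousAt.continuousWithinAt)
    (fun x hx => auxPut_deriv U K x hU hK0 (hw.trans hx.1))
  rw [eq_div_iff (sub_pos.2 hwv).ne'] at he
  have h0 := auxPut_nonneg U K w hK0 hK hw
  have hc0 : 0 < c := hw.trans hc.1
  have hle : U * ((Real.sqrt (2 * Real.pi))⁻¹ *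
      Real.exp (-((Real.log (U / K) / w + v / 2) ^ 2) / 2)) ≤ auxVega U K c := by
    unfold auxVega
    have a1 : Real.log (U / K) / c + c / 2 ≤ Real.log (U / K) / w + v / 2 := by
      have : Real.log (U / K) / c ≤ Real.log (U / K) / w := by
        have := hc.1.le
        gcongr
      linarith [hc.2]
    gcongr
  have := mul_le_mul_of_nonneg_right hle (sub_pos.2 hwv).le
  linarith

lemma aux_bsCall (U K τ s : ℝ) (hτ : 0 < τ) (hs : 0 < s) :
    bsCall U K τ s = auxPut U K (s * Real.sqrt τ) + (U - K) := by
  have hq : 0 < Real.sqrt τ := Real.sqrt_pos.2 hτ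
  have e : (Real.log (U / K) + s ^ 2 * τ / 2) / (s * Real.sqrt τ)
      = Real.log (U / K) / (s * Real.sqrt τ) + s * Real.sqrt τ / 2 := by
    have : s ^ 2 * τ = (s * Real.sqrt τ) ^ 2 := by rw [mul_pow, Real.sq_sqrt hτ.le]
    rw [this]
    field_simp
  unfold bsCall auxPut
  simp only [e]
  rw [show Real.log (U / K) / (s * Real.sqrt τ) + s * Real.sqrt τ / 2 - s * Real.sqrt τ
    = Real.log (U / K) / (s * Real.sqrt τ) - s * Real.sqrt τ / 2 by ring]
  ring

lemma aux_exp_zero (a b : ℝ) (ha : a < 0) (hb : 0 < b) :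
    Tendsto (fun τ : ℝ => Real.exp (a / (b * τ))) (nhdsWithin 0 (Ioi 0)) (nhds 0) := by
  apply Real.tendsto_exp_atBot.comp
  have := tendsto_inv_nhdsGT_zero (𝕜 := ℝ) |>.const_mul_atTop_of_neg (div_neg_of_neg_of_pos ha hb)
  refine this.congr fun τ => ?_
  rw [← div_div, div_eq_mul_inv (a / b)]

lemma aux_q (U σ1 σ2 K : ℝ) (hU : 0 < U) (h1 : 0 < σ1) (h2 : 0 < σ2) (hK0 : 0 < K) :
    Tendsto (fun τ : ℝ => (1 - Real.exp (-2 * K / (σ1 * τ))) / pclvgD σ1 σ2 U τ)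
      (nhdsWithin 0 (Ioi 0)) (nhds (1 / (1 / σ1 + 1 / σ2))) := by
  have a := (aux_exp_zero (-2 * K) σ1 (by linarith) h1).const_sub 1
  have b := ((aux_exp_zero (-2 * U) σ1 (by linarith) h1).const_mul
    (1 / σ2 - 1 / σ1)).const_sub (1 / σ1 + 1 / σ2)
  have h := a.div b (by simp; positivity)
  rw [mul_zero, sub_zero, sub_zero] at h
  exact h

/-- `exp(-c/τ)/√τ → 0`. -/
lemma aux_growth (c : ℝ) (hc : 0 < c) :
    Tendsto (fun τ : ℝ => Real.exp (-c / τ) / Real.sqrt τ) (nhdsWithin 0 (Ioi 0)) (nhds 0) := by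
  have h := (tendsto_rpow_mul_exp_neg_mul_atTop_nhds_zero (1/2) c hc).comp
    (tendsto_inv_nhdsGT_zero (𝕜 := ℝ))
  refine h.congr' ?_
  filter_upwards [self_mem_nhdsWithin] with τ hτ
  simp only [Function.comp]
  rw [← Real.sqrt_eq_rpow, Real.sqrt_inv, div_eq_mul_inv (-c), mul_comm, ← div_eq_mul_inv]

theorem pclvg_implied_vol_short_term_OTM_put (U σ1 σ2 K : ℝ)
    (hU : 0 < U) (h1 : 0 < σ1) (h2 : 0 < σ2) (hK0 : 0 < K) (hK : K < U)
    (IV : ℝ → ℝ) (hpos : ∀ τ : ℝ, 0 < τ → 0 < IV τ)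
    (hiv : ∀ τ : ℝ, 0 < τ → bsCall U K τ (IV τ) = pclvgCall σ1 σ2 U K τ) :
    Filter.Tendsto IV (nhdsWithin 0 (Set.Ioi 0))
      (nhds (Real.sqrt σ1 * Real.log (U / K) / Real.sqrt (2 * (U - K)))) := by
  have hL : 0 < Real.log (U / K) := Real.log_pos ((one_lt_div hK0).2 hK)
  set L := Real.log (U / K) with hLdef
  set s0 := Real.sqrt σ1 * L / Real.sqrt (2 * (U - K)) with hs0
  have hUK : 0 < U - K := sub_pos.2 hK
  have hs0pos : 0 < s0 := by positivity
  have hs0sq : s0 ^ 2 = σ1 * L ^ 2 / (2 * (U - K)) := by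
    rw [hs0, div_pow, mul_pow, Real.sq_sqrt h1.le, Real.sq_sqrt (by positivity)]
  set c := (U - K) / σ1 with hc
  have hcs : c = L ^ 2 / (2 * s0 ^ 2) := by
    rw [hs0sq, hc]; field_simp
  set A := 1 / (1 / σ1 + 1 / σ2) with hA
  have hApos : 0 < A := by positivity
  set q : ℝ → ℝ := fun τ => (1 - Real.exp (-2 * K / (σ1 * τ))) / pclvgD σ1 σ2 U τ with hq
  have hqt : Tendsto q (nhdsWithin 0 (Ioi 0)) (nhds A) := aux_q U σ1 σ2 K hU h1 h2 hK0
  have hput : ∀ τ : ℝ, 0 < τ →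
      auxPut U K (IV τ * Real.sqrt τ) = τ * Real.exp (-c / τ) * q τ := by
    intro τ hτ
    have h := hiv τ hτ
    rw [aux_bsCall U K τ _ hτ (hpos τ hτ)] at h
    unfold pclvgCall at h
    rw [if_pos hK] at h
    have e : -(U - K) / (σ1 * τ) = -c / τ := by rw [hc]; field_simp
    rw [e] at h
    simp only [hq]
    rw [← mul_div_assoc]
    linarith
  have hmem : ∀ᶠ τ : ℝ in nhdsWithin 0 (Ioi 0), 0 < τ := self_mem_nhdsWithin
  refine tendsto_order.2 ⟨?_, ?_⟩
  · intro s hs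
    rcases le_or_gt s 0 with hs' | hs'
    · filter_upwards [hmem] with τ hτ using hs'.trans_lt (hpos τ hτ)
    · have hcc : 0 < L ^ 2 / (2 * s ^ 2) - c := by
        rw [hcs, sub_pos]; gcongr
      have g := (aux_growth _ hcc).const_mul (s * U)
      rw [mul_zero] at g
      filter_upwards [hmem, g.eventually_lt hqt hApos] with τ hτ hlt
      by_contra! hcon
      have hsq : 0 < Real.sqrt τ := Real.sqrt_pos.2 hτ
      have m := (auxPut_strictMono U K hU hK0).monotoneOn
        (mul_pos (hpos τ hτ) hsq : IV τ * Real.sqrt τ ∈ Ioi 0)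
        (mul_pos hs' hsq : s * Real.sqrt τ ∈ Ioi 0) (by gcongr)
      rw [hput τ hτ] at m
      have u := m.trans (auxPut_le U K _ hK0 hK (mul_pos hs' hsq))
      rw [← hLdef] at u
      have e1 : -L ^ 2 / (2 * (s * Real.sqrt τ) ^ 2)
          = -c / τ + -(L ^ 2 / (2 * s ^ 2) - c) / τ := by
        rw [mul_pow, Real.sq_sqrt hτ.le]; field_simp; ring
      rw [e1, Real.exp_add] at u
      have hE := Real.exp_pos (-c / τ)
      have hmul := mul_lt_mul_of_pos_left hlt (mul_pos hτ hE)
      have e2 : τ * Real.exp (-c / τ) *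
          (s * U * (Real.exp (-(L ^ 2 / (2 * s ^ 2) - c) / τ) / Real.sqrt τ))
          = s * Real.sqrt τ * (U * (Real.exp (-c / τ)
            * Real.exp (-(L ^ 2 / (2 * s ^ 2) - c) / τ))) := by
        have : τ / Real.sqrt τ = Real.sqrt τ := Real.div_sqrt
        calc _ = (τ / Real.sqrt τ) * (Real.exp (-c / τ) *
          (s * U * (Real.exp (-(L ^ 2 / (2 * s ^ 2) - c) / τ)))) := by ring
          _ = _ := by rw [this]; ring
      rw [e2] at hmul
      linarith
  · intro s hs
    obtain ⟨r, hr0, hrs⟩ := exists_between hs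
    have hr : 0 < r := hs0pos.trans hr0
    have hspos : 0 < s := hs0pos.trans hs
    have hcc : 0 < c - L ^ 2 / (2 * r ^ 2) := by
      rw [hcs, sub_pos]; gcongr
    set d := c - L ^ 2 / (2 * r ^ 2) with hd
    set B := (s - r) * (U * (Real.sqrt (2 * Real.pi))⁻¹) with hB
    have hBpos : 0 < B := by
      have := sub_pos.2 hrs
      positivity
    have tid : Tendsto (fun τ : ℝ => τ) (nhdsWithin 0 (Ioi 0)) (nhds 0) :=
      tendsto_id.mono_left nhdsWithin_le_nhds
    have g1 : Tendsto (fun τ : ℝ => Real.sqrt τ * Real.exp (-d / (1 * τ)) * q τ)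
        (nhdsWithin 0 (Ioi 0)) (nhds (Real.sqrt 0 * 0 * A)) :=
      (((Real.continuous_sqrt.tendsto 0).comp tid).mul
        (aux_exp_zero (-d) 1 (by linarith) one_pos)).mul hqt
    have g2 : Tendsto (fun τ : ℝ => B * Real.exp (-(L * s / (2 * r)) - s ^ 2 * τ / 8))
        (nhdsWithin 0 (Ioi 0)) (nhds (B * Real.exp (-(L * s / (2 * r)) - s ^ 2 * 0 / 8))) := by
      have : Continuous (fun τ : ℝ => B * Real.exp (-(L * s / (2 * r)) - s ^ 2 * τ / 8)) := by
        fun_prop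
      exact (this.tendsto 0).comp tid
    filter_upwards [hmem, g1.eventually_lt g2 (by
      rw [mul_zero, zero_mul]; positivity)] with τ hτ hlt
    by_contra! hcon
    have hsq : 0 < Real.sqrt τ := Real.sqrt_pos.2 hτ
    have m := (auxPut_strictMono U K hU hK0).monotoneOn
      (mul_pos hspos hsq : s * Real.sqrt τ ∈ Ioi 0)
      (mul_pos (hpos τ hτ) hsq : IV τ * Real.sqrt τ ∈ Ioi 0) (by gcongr)
    rw [hput τ hτ] at m
    have u := (auxPut_ge U K (r * Real.sqrt τ) (s * Real.sqrt τ) hK0 hK (mul_pos hr hsq)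
      (by gcongr)).trans m
    rw [← hLdef] at u
    have hτs : τ = Real.sqrt τ ^ 2 := (Real.sq_sqrt hτ.le).symm
    have e1 : -((L / (r * Real.sqrt τ) + s * Real.sqrt τ / 2) ^ 2) / 2
        = -(L ^ 2 / (2 * r ^ 2)) / τ + (-(L * s / (2 * r)) - s ^ 2 * τ / 8) := by
      set x := Real.sqrt τ
      rw [hτs]; field_simp; ring
    have e3 : -c / τ = -(L ^ 2 / (2 * r ^ 2)) / τ + -d / (1 * τ) := by
      rw [hd, one_mul]; ring
    rw [e1, e3, Real.exp_add, Real.exp_add] at u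
    have hE := Real.exp_pos (-(L ^ 2 / (2 * r ^ 2)) / τ)
    have hmul := mul_lt_mul_of_pos_left hlt (mul_pos hsq hE)
    have e2 : Real.sqrt τ * Real.sqrt τ = τ := Real.mul_self_sqrt hτ.le
    set E := Real.exp (-(L ^ 2 / (2 * r ^ 2)) / τ)
    set F := Real.exp (-d / (1 * τ))
    have e4 : Real.sqrt τ * E * (Real.sqrt τ * F * q τ) = τ * (E * F) * q τ := by
      rw [← e2]; simp only [e2]; linear_combination (E * F * q τ) * e2
    rw [e4, hB] at hmul
    linarith
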